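/- arXiv:1112.1213 — 4 statements merged into one kernel-verified Lean document; each statement's English description precedes it below -/
import Mathlib

section
/- (ker μ-stability of an ideal) Let 𝔥 be an ideal of ℚH. For all x ∈ H with x ∉ ker μ and all v ∈ ker μ, one has T(v)(𝔥 ∩ ℚx̄) = 𝔥 ∩ ℚx̄, and equivalently T(v)(T(-x)(𝔥 ∩ ℚx̄)) = T(-x)(𝔥 ∩ ℚx̄). -/
/-!
If `Y` is supported on the coset `c + ker μ`, then bracketing with a basis element `[a]` acts on `Y`
as the scalar multiple `⟨a, c⟩ T(a)` of a translation, because `⟨a, -⟩` is constant on that coset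
(`bracket_single_eq_smul_transl`). For `x ∉ ker μ` choose `y` with `⟨x, y⟩ ≠ 0`. Then for `v ∈ ker μ`
and `Y ∈ 𝔥 ∩ ℚx̄`,
`[[v - y], [[y], Y]] = ⟨v - y, y + x⟩ ⟨y, x⟩ T(v) Y = -⟨y, x⟩² T(v) Y`,
a nonzero multiple of `T(v) Y` lying in `𝔥`. Hence `T(v)` maps `𝔥 ∩ ℚx̄` into itself, and so does its
inverse `T(-v)`, which gives equality. The second equality follows since translations commute.
-/

open Finsupp

variable {H : Type*} [AddCommGroup H]

/-- The kernel of the `ℤ`-linear map `μ : H → Hom_ℤ(H, ℤ)` induced by the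
alternating form `ω`, i.e. `ker μ = {x ∈ H | ∀ y, ⟨x, y⟩ = 0}`. -/
def kerMu (ω : H →ₗ[ℤ] H →ₗ[ℤ] ℤ) : AddSubgroup H where
  carrier := {x | ∀ y, ω x y = 0}
  add_mem' := by
    intro a b ha hb y
    simp [map_add, ha y, hb y]
  zero_mem' := by intro y; simp
  neg_mem' := by
    intro a ha y
    simp [map_neg, ha y]

/-- The translation operator `T(x)` on `ℚH = H →₀ ℚ`, the `ℚ`-linear map with
`T(x)([y]) = [x + y]`. -/
noncomputable def transl (x : H) : (H →₀ ℚ) →ₗ[ℚ] (H →₀ ℚ) :=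
  Finsupp.lmapDomain ℚ ℚ (fun y => x + y)

lemma transl_single (a b : H) (r : ℚ) : transl a (single b r) = single (a + b) r := by
  simp [transl, Finsupp.mapDomain_single]

lemma transl_transl (a b : H) (Y : H →₀ ℚ) : transl a (transl b Y) = transl (a + b) Y := by
  induction Y using Finsupp.induction_linear with
  | zero => simp
  | add f g hf hg => simp only [map_add, hf, hg]
  | single z r => simp only [transl_single, add_assoc]

lemma transl_zero (Y : H →₀ ℚ) : transl 0 Y = Y := by
  induction Y using Finsupp.induction_linear with
  | zero => simp
  | add f g hf hg => simp only [map_add, hf, hg]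
  | single z r => simp only [transl_single, zero_add]

lemma transl_mem_supported (K : AddSubgroup H) (a c : H) {Y : H →₀ ℚ}
    (hY : Y ∈ Finsupp.supported ℚ ℚ ((c + ·) '' (K : Set H))) :
    transl a Y ∈ Finsupp.supported ℚ ℚ (((a + c) + ·) '' (K : Set H)) := by
  rw [Finsupp.supported_eq_span_single] at hY
  induction hY using Submodule.span_induction with
  | mem Z hZ =>
    obtain ⟨_, ⟨k, hk, rfl⟩, rfl⟩ := hZ
    rw [transl_single]
    exact Finsupp.single_mem_supported ℚ _ ⟨k, hk, add_assoc a c k⟩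
  | zero => simp
  | add Y Z _ _ hY hZ => rw [map_add]; exact add_mem hY hZ
  | smul r Y _ hY => rw [map_smul]; exact Submodule.smul_mem _ r hY

/-- The form is skew-symmetric, so elements of `ker μ` also vanish in the second argument. -/
lemma form_apply_kerMu (ω : H →ₗ[ℤ] H →ₗ[ℤ] ℤ) (halt : ∀ x : H, ω x x = 0)
    (a : H) {k : H} (hk : k ∈ kerMu ω) : ω a k = 0 := by
  have h := halt (a + k)
  have hka : ω k a = 0 := hk a
  simpa [halt, hka] using h

/-- On elements supported on `c + ker μ`, bracketing with `[a]` is `⟨a, c⟩ T(a)`. -/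
lemma bracket_single_eq_smul_transl
    (ω : H →ₗ[ℤ] H →ₗ[ℤ] ℤ) (halt : ∀ x : H, ω x x = 0)
    (B : (H →₀ ℚ) →ₗ[ℚ] (H →₀ ℚ) →ₗ[ℚ] (H →₀ ℚ))
    (hB : ∀ x y : H,
      B (single x 1) (single y 1) = (ω x y : ℚ) • single (x + y) (1 : ℚ))
    (a c : H) {Y : H →₀ ℚ}
    (hY : Y ∈ Finsupp.supported ℚ ℚ ((c + ·) '' (kerMu ω : Set H))) :
    B (single a 1) Y = (ω a c : ℚ) • transl a Y := by
  rw [Finsupp.supported_eq_span_single] at hY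
  induction hY using Submodule.span_induction with
  | mem Z hZ =>
    obtain ⟨_, ⟨k, hk, rfl⟩, rfl⟩ := hZ
    simp only [hB, transl_single, map_add, form_apply_kerMu ω halt a hk, add_zero]
  | zero => simp
  | add Y Z _ _ hY hZ => rw [map_add, map_add, hY, hZ, smul_add]
  | smul r Y _ hY => rw [map_smul, map_smul, hY, smul_comm]

/-- One inclusion of the stability statement. -/
lemma transl_mem_ideal_inf_supported
    (ω : H →ₗ[ℤ] H →ₗ[ℤ] ℤ) (halt : ∀ x : H, ω x x = 0)
    (B : (H →₀ ℚ) →ₗ[ℚ] (H →₀ ℚ) →ₗ[ℚ] (H →₀ ℚ))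
    (hB : ∀ x y : H,
      B (single x 1) (single y 1) = (ω x y : ℚ) • single (x + y) (1 : ℚ))
    (𝔥 : Submodule ℚ (H →₀ ℚ))
    (hIdeal : ∀ X Y : H →₀ ℚ, Y ∈ 𝔥 → B X Y ∈ 𝔥)
    (x : H) (hx : x ∉ kerMu ω) (v : H) (hv : v ∈ kerMu ω) {Y : H →₀ ℚ}
    (hY : Y ∈ 𝔥 ⊓ Finsupp.supported ℚ ℚ ((x + ·) '' (kerMu ω : Set H))) :
    transl v Y ∈ 𝔥 ⊓ Finsupp.supported ℚ ℚ ((x + ·) '' (kerMu ω : Set H)) := by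
  obtain ⟨hY𝔥, hYx⟩ := hY
  refine ⟨?_, ?_⟩
  · obtain ⟨y, hy⟩ : ∃ y, ω x y ≠ 0 := by
      by_contra! h
      exact hx h
    have hyx : ω y x ≠ 0 := by
      have h := halt (x + y)
      simp only [map_add, LinearMap.add_apply, halt] at h
      omega
    have hmem := hIdeal (single (v - y) 1) _ (hIdeal (single y 1) Y hY𝔥)
    have hvyx : ω (v - y) (y + x) = -ω y x := by
      have hv₁ : ω v y = 0 := hv y
      have hv₂ : ω v x = 0 := hv x
      simp [halt, hv₁, hv₂]
    rw [bracket_single_eq_smul_transl ω halt B hB y x hYx, map_smul,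
      bracket_single_eq_smul_transl ω halt B hB (v - y) (y + x)
        (transl_mem_supported _ y x hYx),
      transl_transl, sub_add_cancel, hvyx, smul_smul] at hmem
    refine (Submodule.smul_mem_iff 𝔥 ?_).mp hmem
    exact mul_ne_zero (by exact_mod_cast hyx) (by exact_mod_cast neg_ne_zero.mpr hyx)
  · refine Finsupp.supported_mono ?_ (transl_mem_supported _ v x hYx)
    rintro _ ⟨k, hk, rfl⟩
    exact ⟨v + k, add_mem hv hk, by simp only; abel⟩

/-- **`ker μ`-stability of an ideal.** Let `𝔥` be an ideal of
`ℚH`. For `x ∈ H \ ker μ` and `v ∈ ker μ`, one has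
`T(v)(𝔥 ∩ ℚx̄) = 𝔥 ∩ ℚx̄` and `T(v)(T(-x)(𝔥 ∩ ℚx̄)) = T(-x)(𝔥 ∩ ℚx̄)`. -/
theorem ideal_kerMu_stability
    (ω : H →ₗ[ℤ] H →ₗ[ℤ] ℤ) (halt : ∀ x : H, ω x x = 0)
    (B : (H →₀ ℚ) →ₗ[ℚ] (H →₀ ℚ) →ₗ[ℚ] (H →₀ ℚ))
    (hB : ∀ x y : H,
      B (single x 1) (single y 1) = (ω x y : ℚ) • single (x + y) (1 : ℚ))
    (𝔥 : Submodule ℚ (H →₀ ℚ))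
    (hIdeal : ∀ X Y : H →₀ ℚ, Y ∈ 𝔥 → B X Y ∈ 𝔥)
    (x : H) (hx : x ∉ kerMu ω) (v : H) (hv : v ∈ kerMu ω) :
    Submodule.map (transl v)
        (𝔥 ⊓ Finsupp.supported ℚ ℚ ((x + ·) '' (kerMu ω : Set H)))
      = 𝔥 ⊓ Finsupp.supported ℚ ℚ ((x + ·) '' (kerMu ω : Set H)) ∧
    Submodule.map (transl v)
        (Submodule.map (transl (-x))
          (𝔥 ⊓ Finsupp.supported ℚ ℚ ((x + ·) '' (kerMu ω : Set H))))
      = Submodule.map (transl (-x))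
          (𝔥 ⊓ Finsupp.supported ℚ ℚ ((x + ·) '' (kerMu ω : Set H))) := by
  have hstab : Submodule.map (transl v)
        (𝔥 ⊓ Finsupp.supported ℚ ℚ ((x + ·) '' (kerMu ω : Set H)))
      = 𝔥 ⊓ Finsupp.supported ℚ ℚ ((x + ·) '' (kerMu ω : Set H)) := by
    apply le_antisymm
    · rintro _ ⟨Y, hY, rfl⟩
      exact transl_mem_ideal_inf_supported ω halt B hB 𝔥 hIdeal x hx v hv hY
    · intro Y hY
      refine ⟨transl (-v) Y, transl_mem_ideal_inf_supported ω halt B hB 𝔥 hIdeal x hx (-v)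
        (neg_mem hv) hY, ?_⟩
      rw [transl_transl, add_neg_cancel, transl_zero]
  refine ⟨hstab, ?_⟩
  have hcomm : (transl v).comp (transl (-x)) = (transl (-x)).comp (transl v) := by
    ext1 z
    ext1
    simp only [LinearMap.comp_apply, transl_transl, add_comm]
  rw [← Submodule.map_comp, hcomm, Submodule.map_comp, hstab]
end

section
/- (Classification of ideals: uniqueness) Suppose (V₀, V) and (W₀, W) are two pairs each satisfying: V₀, V (resp. W₀, W) are ℚ-subspaces of ℚ(ker μ); V (resp. W) has the ker μ-stability (with V = 0 and W = 0 if μ = 0); and V₀ ⊕ ⊕_{x̄ ∈ (H/ker μ) \ {0̄}} T(x̄)(V) = W₀ ⊕ ⊕_{x̄ ∈ (H/ker μ) \ {0̄}} T(x̄)(W). Then V₀ = W₀ and V = W. -/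
/-!
The space `ℚH` is graded by `H ⧸ ker μ`, the component of degree `c` being the span of the coset `c`.
The family `piecesOf ω V₀ V` is subordinate to this grading, so each piece is recovered from the total
sum by intersecting it with the corresponding component (`iSup_inf_supported_fiber`). Equal sums
therefore have equal pieces. Degree `0` gives `V₀ = W₀`. If `μ ≠ 0`, some degree `c ≠ 0` exists, and
there `T(x)(V) = T(x)(W)` with `T(x)` injective; if `μ = 0`, then `V = W = 0` by hypothesis.
-/

open Finsupp

variable {H : Type*} [AddCommGroup H]

open Classical in
/-- The family of graded pieces of `V₀ ⊕ ⊕_{x̄ ≠ 0̄} T(x̄)(V)`: the piece of degree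
`0̄` is `V₀`, and the piece of degree `x̄ ≠ 0̄` is `T(x̄)(V) := T(x)(V)` for a
representative `x` of the coset `x̄` (well-defined when `V` is `ker μ`-stable). -/
noncomputable def piecesOf (ω : H →ₗ[ℤ] H →ₗ[ℤ] ℤ) (V₀ V : Submodule ℚ (H →₀ ℚ)) :
    H ⧸ kerMu ω → Submodule ℚ (H →₀ ℚ) :=
  fun c => if c = 0 then V₀ else Submodule.map (transl (Quotient.out c)) V

/-- A family of subspaces subordinate to the grading of `ℚH` by the fibers of `f` is recovered from
its sum: this is the modular law, since the pieces of degree `≠ c` live off the fiber over `c`. -/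
theorem iSup_inf_supported_fiber {H ι : Type*} (f : H → ι) (A : ι → Submodule ℚ (H →₀ ℚ))
    (hA : ∀ c, A c ≤ Finsupp.supported ℚ ℚ (f ⁻¹' {c})) (c : ι) :
    (⨆ d, A d) ⊓ Finsupp.supported ℚ ℚ (f ⁻¹' {c}) = A c := by
  have hrest : (⨆ d, ⨆ _ : d ≠ c, A d) ≤ Finsupp.supported ℚ ℚ (f ⁻¹' {c})ᶜ := by
    refine iSup₂_le fun d hd => (hA d).trans (Finsupp.supported_mono ?_)
    rintro x hx hxc
    exact hd (hx.symm.trans hxc)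
  have hdisj : (⨆ d, ⨆ _ : d ≠ c, A d) ⊓ Finsupp.supported ℚ ℚ (f ⁻¹' {c}) = ⊥ :=
    ((Finsupp.disjoint_supported_supported disjoint_compl_left).mono_left hrest).eq_bot
  have hsplit : (⨆ d, A d) = A c ⊔ ⨆ d, ⨆ _ : d ≠ c, A d := by
    refine le_antisymm (iSup_le fun d => ?_)
      (sup_le (le_iSup A c) (iSup₂_le fun d _ => le_iSup A d))
    by_cases hd : d = c
    · exact hd ▸ le_sup_left
    · exact le_sup_of_le_right (le_iSup₂_of_le d hd le_rfl)
  rw [hsplit, sup_inf_assoc_of_le _ (hA c), hdisj, sup_bot_eq]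

theorem transl_injective (x : H) : Function.Injective (transl x) :=
  Finsupp.mapDomain_injective (add_right_injective x)

theorem piecesOf_le_supported (ω : H →ₗ[ℤ] H →ₗ[ℤ] ℤ) (V₀ V : Submodule ℚ (H →₀ ℚ))
    (hV₀ : V₀ ≤ Finsupp.supported ℚ ℚ (kerMu ω : Set H))
    (hV : V ≤ Finsupp.supported ℚ ℚ (kerMu ω : Set H)) (c : H ⧸ kerMu ω) :
    piecesOf ω V₀ V c ≤
      Finsupp.supported ℚ ℚ ((fun x : H => (x : H ⧸ kerMu ω)) ⁻¹' {c}) := by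
  unfold piecesOf
  split_ifs with hc
  · refine hV₀.trans (Finsupp.supported_mono fun x hx => ?_)
    subst hc
    exact (QuotientAddGroup.eq_zero_iff x).2 hx
  · refine (Submodule.map_mono hV).trans ?_
    rw [transl, Finsupp.lmapDomain_supported]
    refine Finsupp.supported_mono ?_
    rintro _ ⟨y, hy, rfl⟩
    have hy0 : (y : H ⧸ kerMu ω) = 0 := (QuotientAddGroup.eq_zero_iff y).2 hy
    have hout : ((Quotient.out c : H) : H ⧸ kerMu ω) = c := Quotient.out_eq' c
    simp [hy0, hout]

/-- **Classification of ideals: uniqueness.** If `(V₀, V)` and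
`(W₀, W)` both consist of subspaces of `ℚ(ker μ)`, with `V` and `W`
`ker μ`-stable (`V = W = 0` if `μ = 0`), and
`V₀ ⊕ ⊕_{x̄ ≠ 0̄} T(x̄)(V) = W₀ ⊕ ⊕_{x̄ ≠ 0̄} T(x̄)(W)`, then `V₀ = W₀` and
`V = W`. -/
theorem ideal_classification_uniqueness
    (ω : H →ₗ[ℤ] H →ₗ[ℤ] ℤ) (halt : ∀ x : H, ω x x = 0)
    (V₀ V W₀ W : Submodule ℚ (H →₀ ℚ))
    (hV₀ : V₀ ≤ Finsupp.supported ℚ ℚ (kerMu ω : Set H))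
    (hV : V ≤ Finsupp.supported ℚ ℚ (kerMu ω : Set H))
    (hVstab : ∀ v ∈ kerMu ω, Submodule.map (transl v) V ≤ V)
    (hVzero : ω = 0 → V = ⊥)
    (hW₀ : W₀ ≤ Finsupp.supported ℚ ℚ (kerMu ω : Set H))
    (hW : W ≤ Finsupp.supported ℚ ℚ (kerMu ω : Set H))
    (hWstab : ∀ v ∈ kerMu ω, Submodule.map (transl v) W ≤ W)
    (hWzero : ω = 0 → W = ⊥)
    (heq : (⨆ c : H ⧸ kerMu ω, piecesOf ω V₀ V c)
         = (⨆ c : H ⧸ kerMu ω, piecesOf ω W₀ W c)) :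
    V₀ = W₀ ∧ V = W := by
  have hpiece : ∀ c, piecesOf ω V₀ V c = piecesOf ω W₀ W c := fun c => by
    rw [← iSup_inf_supported_fiber _ _ (piecesOf_le_supported ω V₀ V hV₀ hV) c, heq,
      iSup_inf_supported_fiber _ _ (piecesOf_le_supported ω W₀ W hW₀ hW) c]
  refine ⟨by simpa [piecesOf] using hpiece 0, ?_⟩
  by_cases hω : ω = 0
  · rw [hVzero hω, hWzero hω]
  · obtain ⟨x, hx⟩ : ∃ x, x ∉ kerMu ω := by
      by_contra! h
      exact hω (LinearMap.ext fun x => LinearMap.ext fun y => h x y)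
    have hc : (x : H ⧸ kerMu ω) ≠ 0 := fun h => hx ((QuotientAddGroup.eq_zero_iff x).1 h)
    have hmap := hpiece (x : H ⧸ kerMu ω)
    simp only [piecesOf, if_neg hc] at hmap
    exact Submodule.map_injective_of_injective (transl_injective _) hmap
end

section
/- For every m ≥ 1, the m-th term of the lower central series of the homological Goldman Lie algebra equals ℚ(H \ ker μ): with ℚH_{(1)} := [ℚH, ℚH] and ℚH_{(m)} := [ℚH, ℚH_{(m-1)}], one has ℚH_{(m)} = ℚ(H \ ker μ) for all m ≥ 1. -/
/-!
The theorem rests on one fact: for a subspace `W` with `ℚ(H \ ker μ) ⊆ W`, one has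
`[ℚH, W] = ℚ(H \ ker μ)`. The series starts at `ℚH`, so induction then gives every `m ≥ 1`.

For `⊆`: if `⟨x, y⟩ ≠ 0`, then `⟨x + y, y⟩ = ⟨x, y⟩ ≠ 0` because the form is alternating, so
`x + y ∉ ker μ`; hence every bracket lies in `ℚ(H \ ker μ)` (`bracket_mem_supported`).
For `⊇`: given `z ∉ ker μ`, choose `y` with `⟨z, y⟩ ≠ 0`. Then `y ∉ ker μ`, so `[y] ∈ W`, and
`[[z - y], [y]] = ⟨z, y⟩ [z]`, so `[z]` is a rational multiple of a bracket
(`bracketSub_top_eq_supported`).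
-/

open Finsupp

variable {H : Type*} [AddCommGroup H]

/-- The span of brackets `[U, W]` of two subspaces of `ℚH`. -/
noncomputable def bracketSub (B : (H →₀ ℚ) →ₗ[ℚ] (H →₀ ℚ) →ₗ[ℚ] (H →₀ ℚ))
    (U W : Submodule ℚ (H →₀ ℚ)) : Submodule ℚ (H →₀ ℚ) :=
  Submodule.span ℚ {z : H →₀ ℚ | ∃ u ∈ U, ∃ w ∈ W, z = B u w}

/-- The lower central series: `ℚH₍₀₎ = ℚH`, `ℚH₍ₘ₊₁₎ = [ℚH, ℚH₍ₘ₎]`;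
in particular `ℚH₍₁₎ = [ℚH, ℚH]`. -/
noncomputable def goldmanLowerCentralSeries
    (B : (H →₀ ℚ) →ₗ[ℚ] (H →₀ ℚ) →ₗ[ℚ] (H →₀ ℚ)) :
    ℕ → Submodule ℚ (H →₀ ℚ)
  | 0 => ⊤
  | m + 1 => bracketSub B ⊤ (goldmanLowerCentralSeries B m)

theorem bracket_mem_supported
    (ω : H →ₗ[ℤ] H →ₗ[ℤ] ℤ) (halt : ∀ x : H, ω x x = 0)
    (B : (H →₀ ℚ) →ₗ[ℚ] (H →₀ ℚ) →ₗ[ℚ] (H →₀ ℚ))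
    (hB : ∀ x y : H,
      B (single x 1) (single y 1) = (ω x y : ℚ) • single (x + y) (1 : ℚ))
    (u w : H →₀ ℚ) :
    B u w ∈ Finsupp.supported ℚ ℚ ((kerMu ω : Set H)ᶜ) := by
  induction u using Finsupp.induction_linear with
  | zero => simp
  | add f g hf hg =>
    rw [map_add, LinearMap.add_apply]
    exact Submodule.add_mem _ hf hg
  | single x a =>
    induction w using Finsupp.induction_linear with
    | zero => simp
    | add f g hf hg =>
      rw [map_add]
      exact Submodule.add_mem _ hf hg
    | single y b =>
      have hx : single x a = a • single x (1 : ℚ) := by simp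
      have hy : single y b = b • single y (1 : ℚ) := by simp
      rw [hx, hy, map_smul, map_smul, LinearMap.smul_apply, hB]
      refine Submodule.smul_mem _ _ (Submodule.smul_mem _ _ ?_)
      by_cases h : ω x y = 0
      · simp [h]
      · refine Submodule.smul_mem _ _ (Finsupp.single_mem_supported ℚ _ fun hk => h ?_)
        have := hk y
        simpa [halt y] using this

theorem bracketSub_top_eq_supported
    (ω : H →ₗ[ℤ] H →ₗ[ℤ] ℤ) (halt : ∀ x : H, ω x x = 0)
    (B : (H →₀ ℚ) →ₗ[ℚ] (H →₀ ℚ) →ₗ[ℚ] (H →₀ ℚ))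
    (hB : ∀ x y : H,
      B (single x 1) (single y 1) = (ω x y : ℚ) • single (x + y) (1 : ℚ))
    (W : Submodule ℚ (H →₀ ℚ))
    (hW : Finsupp.supported ℚ ℚ ((kerMu ω : Set H)ᶜ) ≤ W) :
    bracketSub B ⊤ W = Finsupp.supported ℚ ℚ ((kerMu ω : Set H)ᶜ) := by
  apply le_antisymm
  · refine Submodule.span_le.2 ?_
    rintro _ ⟨u, -, w, -, rfl⟩
    exact bracket_mem_supported ω halt B hB u w
  · rw [Finsupp.supported_eq_span_single, Submodule.span_le]
    rintro _ ⟨z, hz, rfl⟩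
    obtain ⟨y, hy⟩ : ∃ y, ω z y ≠ 0 := by
      by_contra! h
      exact hz h
    have hyk : y ∈ ((kerMu ω : Set H)ᶜ) := by
      intro hk
      apply hy
      -- Antisymmetry of `ω`, by expanding `⟨z + y, z + y⟩ = 0`.
      have h := halt (z + y)
      simpa [halt z, halt y, hk z] using h
    have hmem : B (single (z - y) 1) (single y 1) ∈ bracketSub B ⊤ W :=
      Submodule.subset_span
        ⟨_, Submodule.mem_top, _, hW (Finsupp.single_mem_supported ℚ _ hyk), rfl⟩
    have hval : B (single (z - y) 1) (single y 1) = (ω z y : ℚ) • single z (1 : ℚ) := by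
      rw [hB, sub_add_cancel, map_sub, LinearMap.sub_apply, halt y, sub_zero]
    rw [hval] at hmem
    exact (Submodule.smul_mem_iff _ (Int.cast_ne_zero.2 hy)).1 hmem

/-- For every `m ≥ 1`, the `m`-th term of the lower central
series of the homological Goldman Lie algebra equals `ℚ(H \ ker μ)`. -/
theorem lowerCentralSeries_eq_span_compl_kerMu
    (ω : H →ₗ[ℤ] H →ₗ[ℤ] ℤ) (halt : ∀ x : H, ω x x = 0)
    (B : (H →₀ ℚ) →ₗ[ℚ] (H →₀ ℚ) →ₗ[ℚ] (H →₀ ℚ))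
    (hB : ∀ x y : H,
      B (single x 1) (single y 1) = (ω x y : ℚ) • single (x + y) (1 : ℚ))
    (m : ℕ) (hm : 1 ≤ m) :
    goldmanLowerCentralSeries B m
      = Finsupp.supported ℚ ℚ ((kerMu ω : Set H)ᶜ) := by
  induction m, hm using Nat.le_induction with
  | base => exact bracketSub_top_eq_supported ω halt B hB _ le_top
  | succ n _ ih => exact bracketSub_top_eq_supported ω halt B hB _ ih.ge
end

section
/- (Step 1 of the decomposition of an ideal) Let 𝔥 be an ideal of ℚH and let X = X₁ + ⋯ + Xₙ ∈ 𝔥, where each Xᵢ ∈ ℚx̄ᵢ \ {0} for some xᵢ ∈ H, the cosets x̄ᵢ = xᵢ + ker μ are pairwise distinct, and x̄ᵢ ≠ 0̄ for all i. Then Xᵢ ∈ 𝔥 for every i = 1, …, n. -/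
/-!
For `a : H`, put `f(y) = ⟨a, y⟩`. Since the form is alternating, bracketing twice and three times
with multiples of `a` that add up to zero gives operators that are diagonal on the basis `[y]`:
`ad[-a] ad[a] [y] = -f(y)² [y]` and `ad[-2a] ad[a] ad[a] [y] = -2 f(y)³ [y]`.
They preserve every ideal, and they act on `ℚx̄` as the scalars `-f(x)²` and `-2 f(x)³`
(`bracket_sq`, `bracket_cube`). Hence the set of coefficient vectors `c` with `∑ cₖ Xₖ ∈ 𝔥`
is closed under multiplication by `f(xₖ)²` and `f(xₖ)³`.

Distinct cosets `x̄ᵢ ≠ x̄ⱼ` are separated by some `f`; with `p = f(xᵢ)` and `q = f(xⱼ)`, one of the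
multipliers `f² (f - q)` (if `p ≠ 0`) and `f² - q²` (if `p = 0`) kills `Xⱼ` and rescales `Xᵢ` by a
nonzero factor. Removing the summands `Xⱼ`, `j ≠ i`, one at a time leaves a nonzero multiple of `Xᵢ`.
-/

open Finsupp

variable {H : Type*} [AddCommGroup H]

theorem form_swap (ω : H →ₗ[ℤ] H →ₗ[ℤ] ℤ) (halt : ∀ x : H, ω x x = 0) (x y : H) :
    ω x y = - ω y x := by
  have h := halt (x + y)
  simp only [map_add, LinearMap.add_apply, halt] at h
  linarith

/-- The functional `⟨a, -⟩` is constant on cosets of `ker μ`, so a linear map scaling every basis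
vector `[y]` by a function of `⟨a, y⟩` acts on `ℚx̄` as a single scalar. -/
theorem eq_smul_of_coset (ω : H →ₗ[ℤ] H →ₗ[ℤ] ℤ) (halt : ∀ x : H, ω x x = 0)
    (T : (H →₀ ℚ) →ₗ[ℚ] (H →₀ ℚ)) (a x : H) (g : ℤ → ℚ)
    (hT : ∀ y, T (single y 1) = g (ω a y) • single y (1 : ℚ))
    {Y : H →₀ ℚ} (hY : Y ∈ Finsupp.supported ℚ ℚ ((x + ·) '' (kerMu ω : Set H))) :
    T Y = g (ω a x) • Y := by
  rw [Finsupp.supported_eq_span_single] at hY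
  induction hY using Submodule.span_induction with
  | mem Z hZ =>
    obtain ⟨_, ⟨k, hk, rfl⟩, rfl⟩ := hZ
    have hk0 : ω a k = 0 := by
      rw [form_swap ω halt, show ω k a = 0 from hk a, neg_zero]
    simp only [hT, map_add, hk0, add_zero]
  | zero => simp
  | add Z W _ _ hZ hW => rw [map_add, hZ, hW, smul_add]
  | smul r Z _ hZ => rw [map_smul, hZ, smul_comm]

theorem bracket_sq (ω : H →ₗ[ℤ] H →ₗ[ℤ] ℤ) (halt : ∀ x : H, ω x x = 0)
    (B : (H →₀ ℚ) →ₗ[ℚ] (H →₀ ℚ) →ₗ[ℚ] (H →₀ ℚ))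
    (hB : ∀ x y : H,
      B (single x 1) (single y 1) = (ω x y : ℚ) • single (x + y) (1 : ℚ))
    (a x : H) {Y : H →₀ ℚ}
    (hY : Y ∈ Finsupp.supported ℚ ℚ ((x + ·) '' (kerMu ω : Set H))) :
    B (single (-a) 1) (B (single a 1) Y) = (-(ω a x : ℚ) ^ 2) • Y := by
  refine eq_smul_of_coset ω halt ((B (single (-a) 1)).comp (B (single a 1))) a x
    (fun m => -(m : ℚ) ^ 2) (fun y => ?_) hY
  rw [LinearMap.comp_apply, hB, map_smul, hB, smul_smul, neg_add_cancel_left]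
  congr 1
  simp only [map_add, map_neg, LinearMap.neg_apply, halt]
  push_cast
  ring

theorem bracket_cube (ω : H →ₗ[ℤ] H →ₗ[ℤ] ℤ) (halt : ∀ x : H, ω x x = 0)
    (B : (H →₀ ℚ) →ₗ[ℚ] (H →₀ ℚ) →ₗ[ℚ] (H →₀ ℚ))
    (hB : ∀ x y : H,
      B (single x 1) (single y 1) = (ω x y : ℚ) • single (x + y) (1 : ℚ))
    (a x : H) {Y : H →₀ ℚ}
    (hY : Y ∈ Finsupp.supported ℚ ℚ ((x + ·) '' (kerMu ω : Set H))) :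
    B (single (-a + -a) 1) (B (single a 1) (B (single a 1) Y)) =
      (-2 * (ω a x : ℚ) ^ 3) • Y := by
  refine eq_smul_of_coset ω halt
    ((B (single (-a + -a) 1)).comp ((B (single a 1)).comp (B (single a 1)))) a x
    (fun m => -2 * (m : ℚ) ^ 3) (fun y => ?_) hY
  rw [LinearMap.comp_apply, LinearMap.comp_apply, hB, map_smul, hB, map_smul, map_smul, hB,
    smul_smul, smul_smul, show -a + -a + (a + (a + y)) = y by abel]
  congr 1
  simp only [map_add, map_neg, LinearMap.neg_apply, LinearMap.add_apply, halt]
  push_cast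
  ring

/-- **Step 1 of the decomposition of an ideal.** Let `𝔥` be an
ideal of `ℚH` and `X = X₁ + ⋯ + Xₙ ∈ 𝔥` with each `Xᵢ ∈ ℚx̄ᵢ \ {0}`, the cosets
`x̄ᵢ` pairwise distinct and all nonzero. Then each `Xᵢ ∈ 𝔥`. -/
theorem ideal_decomposition_step1
    (ω : H →ₗ[ℤ] H →ₗ[ℤ] ℤ) (halt : ∀ x : H, ω x x = 0)
    (B : (H →₀ ℚ) →ₗ[ℚ] (H →₀ ℚ) →ₗ[ℚ] (H →₀ ℚ))
    (hB : ∀ x y : H,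
      B (single x 1) (single y 1) = (ω x y : ℚ) • single (x + y) (1 : ℚ))
    (𝔥 : Submodule ℚ (H →₀ ℚ))
    (hIdeal : ∀ X Y : H →₀ ℚ, Y ∈ 𝔥 → B X Y ∈ 𝔥)
    (n : ℕ) (x : Fin n → H) (X : Fin n → (H →₀ ℚ))
    (hmem : ∀ i, X i ∈ Finsupp.supported ℚ ℚ ((x i + ·) '' (kerMu ω : Set H)))
    (hne : ∀ i, X i ≠ 0)
    (hdist : ∀ i j, i ≠ j → x i - x j ∉ kerMu ω)
    (hnz : ∀ i, x i ∉ kerMu ω)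
    (hX : (∑ i, X i) ∈ 𝔥) :
    ∀ i, X i ∈ 𝔥 := by
  intro i
  have hsq : ∀ (a : H) (c : Fin n → ℚ), ∑ k, c k • X k ∈ 𝔥 →
      ∑ k, (c k * (ω a (x k) : ℚ) ^ 2) • X k ∈ 𝔥 := by
    intro a c hc
    have h := 𝔥.smul_mem (-1) (hIdeal (single (-a) 1) _ (hIdeal (single a 1) _ hc))
    simp only [map_sum, map_smul, bracket_sq ω halt B hB a _ (hmem _), Finset.smul_sum,
      smul_smul] at h
    convert h using 3
    ring
  have hcube : ∀ (a : H) (c : Fin n → ℚ), ∑ k, c k • X k ∈ 𝔥 →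
      ∑ k, (c k * (ω a (x k) : ℚ) ^ 3) • X k ∈ 𝔥 := by
    intro a c hc
    have h := 𝔥.smul_mem (-1 / 2) (hIdeal (single (-a + -a) 1) _
      (hIdeal (single a 1) _ (hIdeal (single a 1) _ hc)))
    simp only [map_sum, map_smul, bracket_cube ω halt B hB a _ (hmem _), Finset.smul_sum,
      smul_smul] at h
    convert h using 3
    ring
  have key : ∀ S : Finset (Fin n), i ∉ S →
      ∃ c : Fin n → ℚ, ∑ k, c k • X k ∈ 𝔥 ∧ c i ≠ 0 ∧ ∀ j ∈ S, c j = 0 := by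
    intro S
    induction S using Finset.induction_on with
    | empty => exact fun _ => ⟨fun _ => 1, by simpa using hX, one_ne_zero, by simp⟩
    | insert j S _ ih =>
      intro hi
      rw [Finset.mem_insert, not_or] at hi
      obtain ⟨c, hc, hci, hcS⟩ := ih hi.2
      obtain ⟨a, ha⟩ : ∃ a, ω a (x i) ≠ ω a (x j) := by
        by_contra! h
        refine hdist i j hi.1 fun y => ?_
        rw [form_swap ω halt, map_sub, h y, sub_self, neg_zero]
      have ha' : (ω a (x i) : ℚ) - ω a (x j) ≠ 0 := sub_ne_zero.mpr (by exact_mod_cast ha)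
      by_cases hp : (ω a (x i) : ℚ) = 0
      · refine ⟨fun k => c k * ((ω a (x k) : ℚ) ^ 2 - (ω a (x j) : ℚ) ^ 2), ?_, ?_, ?_⟩
        · have h := 𝔥.sub_mem (hsq a c hc) (𝔥.smul_mem ((ω a (x j) : ℚ) ^ 2) hc)
          simp only [Finset.smul_sum, smul_smul, ← Finset.sum_sub_distrib, ← sub_smul] at h
          convert h using 3
          ring
        · rw [hp, zero_sub, neg_ne_zero] at ha'
          simpa [hp, hci] using ha'
        · intro k hk
          rcases Finset.mem_insert.mp hk with rfl | hk
          · simp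
          · simp [hcS k hk]
      · refine ⟨fun k => c k * ((ω a (x k) : ℚ) ^ 2 * (ω a (x k) - ω a (x j))), ?_, ?_, ?_⟩
        · have h := 𝔥.sub_mem (hcube a c hc) (𝔥.smul_mem (ω a (x j) : ℚ) (hsq a c hc))
          simp only [Finset.smul_sum, smul_smul, ← Finset.sum_sub_distrib, ← sub_smul] at h
          convert h using 3
          ring
        · exact mul_ne_zero hci (mul_ne_zero (pow_ne_zero 2 hp) ha')
        · intro k hk
          rcases Finset.mem_insert.mp hk with rfl | hk
          · simp
          · simp [hcS k hk]
  obtain ⟨c, hc, hci, hc0⟩ := key (Finset.univ.erase i) (Finset.notMem_erase i _)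
  rw [Finset.sum_eq_single i
    (fun j _ hj => by rw [hc0 j (Finset.mem_erase.mpr ⟨hj, Finset.mem_univ j⟩), zero_smul])
    (fun h => absurd (Finset.mem_univ i) h)] at hc
  exact (𝔥.smul_mem_iff hci).mp hc
end
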